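/- Let Γ be a connected bipartite (δ_1,δ_2)-semiregular graph on n = n_1 + n_2 vertices with d+1 distinct eigenvalues, where d is even and m(0) ≠ |n_1 − n_2|. Then Γ is distance-biregular if and only if k̄_{1,d} = p_{1,d}(λ_0) and k̄_{2,d} = p_{2,d}(λ_0). -/

import Mathlib

open Polynomial Finset Matrix

/-- The discrete scalar product `⟨f,g⟩ = ∑_{i∈s} w i · f(λ i) · g(λ i)` on a mesh. -/
def discInner (s : Finset ℕ) (lam w : ℕ → ℝ) (f g : Polynomial ℝ) : ℝ :=
  ∑ i ∈ s, w i * f.eval (lam i) * g.eval (lam i)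

/-- `Γ_i(u)`: the set of vertices at distance `i` from `u`. -/
noncomputable def sphere {V : Type*} [Fintype V] [DecidableEq V] (G : SimpleGraph V)
    (u : V) (i : ℕ) : Finset V :=
  Finset.univ.filter (fun v => G.dist u v = i)

/-- `Γ` (bipartite with stable sets `V₁, V₂`) is distance-biregular: it is
distance-regular around each vertex, and the intersection numbers
`c_i(u,v) = |Γ_{i−1}(u)∩Γ(v)|` and `b_i(u,v) = |Γ_{i+1}(u)∩Γ(v)|` (for `v ∈ Γ_i(u)`)
depend only on `i` and on the stable set containing `u`. -/
def IsDistBiregularOn {V : Type*} [Fintype V] [DecidableEq V] (G : SimpleGraph V)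
    [DecidableRel G.Adj] (V1 V2 : Finset V) : Prop :=
  ∃ c1 b1 c2 b2 : ℕ → ℕ,
    (∀ u ∈ V1, ∀ v : V,
      (sphere G u (G.dist u v - 1) ∩ G.neighborFinset v).card = c1 (G.dist u v) ∧
      (sphere G u (G.dist u v + 1) ∩ G.neighborFinset v).card = b1 (G.dist u v)) ∧
    (∀ u ∈ V2, ∀ v : V,
      (sphere G u (G.dist u v - 1) ∩ G.neighborFinset v).card = c2 (G.dist u v) ∧
      (sphere G u (G.dist u v + 1) ∩ G.neighborFinset v).card = b2 (G.dist u v))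

/-!
Fix a stable set `S`, a vertex `u ∈ S`, and write `A i` for the distance-`i` matrix. Because the
Perron vector of a semiregular graph takes one value on each stable set, `E 0 u v` depends only on
the distance from `u` to `v`, and Hoffman's identity `w 0 • ∑ j, p j (A) = E 0` forces
`p d (A) u v = 1` at distance `d` when `d` is even. The rows `p d (A) u`, `u ∈ S`, have mean square
norm `‖p d‖² = p d (lam 0)`, and restricting them to distance `d` can only lower it, down to the
mean number of vertices at distance `d`. So the mean excess equals `p d (lam 0)` exactly when
`p d (A)` and `A d` have the same rows over `S`.

In that case the three-term recurrence, run downwards, identifies row `u` of `p i (A)` with a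
multiple of row `u` of `A i` for every `i`, and its coefficients are the intersection numbers.
Conversely, intersection numbers yield a polynomial `q` of degree `d` with `q (A)` proportional to
`A d` on the rows over `S`; such a `q` is orthogonal to `p 0, …, p (d - 1)`, so it agrees with a
multiple of `p d` on the spectrum.

The condition `m(0) ≠ |n₁ - n₂|` makes the local weights nonzero: a projection `E j` vanishing on
the rows of one stable set belongs to the eigenvalue `0` and has trace `|n₁ - n₂|`.
-/

section OrthogonalPolynomials

lemma degree_sub_smul_lt {K : Type*} [Field K] {q r : K[X]} {n : ℕ} (hr : r.degree = n)
    (hq : q.degree ≤ n) : (q - (q.coeff n / r.coeff n) • r).degree < n := by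
  have hne : r.coeff n ≠ 0 := coeff_ne_zero_of_eq_degree hr
  rw [degree_lt_iff_coeff_zero]
  intro m hm
  rcases hm.eq_or_lt with rfl | hm
  · simp [hne]
  · have hqm : q.coeff m = 0 := coeff_eq_zero_of_degree_lt (hq.trans_lt (by exact_mod_cast hm))
    have hrm : r.coeff m = 0 := coeff_eq_zero_of_degree_lt (hr.trans_lt (by exact_mod_cast hm))
    simp [hqm, hrm]

lemma linearMap_eq_zero_of_degree_lt {K M : Type*} [Field K] [AddCommGroup M] [Module K M]
    {p : ℕ → K[X]} (φ : K[X] →ₗ[K] M) (n : ℕ) (hdeg : ∀ i < n, (p i).degree = i)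
    (hφ : ∀ i < n, φ (p i) = 0) {q : K[X]} (hq : q.degree < n) : φ q = 0 := by
  induction n generalizing q with
  | zero =>
    have hq0 : q = 0 := by simpa using hq
    rw [hq0, map_zero]
  | succ n ih =>
    have hlt := degree_sub_smul_lt (hdeg n n.lt_succ_self)
      (Order.lt_succ_iff.mp (by exact_mod_cast hq) : q.degree ≤ n)
    have hsub := ih (fun i hi => hdeg i (hi.trans n.lt_succ_self))
      (fun i hi => hφ i (hi.trans n.lt_succ_self)) hlt
    rwa [map_sub, map_smul, hφ n n.lt_succ_self, smul_zero, sub_zero] at hsub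

/-- `discInner` as a bilinear map, so that linear-map lemmas apply to it. -/
noncomputable def discForm (s : Finset ℕ) (lam w : ℕ → ℝ) : ℝ[X] →ₗ[ℝ] ℝ[X] →ₗ[ℝ] ℝ :=
  ∑ i ∈ s, w i • (LinearMap.mul ℝ ℝ).compl₁₂ (leval (lam i)) (leval (lam i))

lemma discForm_apply (s : Finset ℕ) (lam w : ℕ → ℝ) (f g : ℝ[X]) :
    discForm s lam w f g = discInner s lam w f g := by
  simp [discForm, discInner, leval, mul_assoc]

lemma discInner_comm (s : Finset ℕ) (lam w : ℕ → ℝ) (f g : ℝ[X]) :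
    discInner s lam w f g = discInner s lam w g f :=
  Finset.sum_congr rfl fun _ _ => by ring

lemma discInner_mul_X (s : Finset ℕ) (lam w : ℕ → ℝ) (f g : ℝ[X]) :
    discInner s lam w (f * X) g = discInner s lam w f (g * X) :=
  Finset.sum_congr rfl fun _ _ => by simp only [eval_mul, eval_X]; ring

lemma discInner_lagrangeBasis {s : Finset ℕ} {lam : ℕ → ℝ} (hlam : Set.InjOn lam s) (w : ℕ → ℝ)
    {k : ℕ} (hk : k ∈ s) (f : ℝ[X]) :
    discInner s lam w (Lagrange.basis s lam k) f = w k * f.eval (lam k) := by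
  rw [discInner, Finset.sum_eq_single_of_mem k hk]
  · rw [Lagrange.eval_basis_self hlam hk, mul_one]
  · intro j hj hjk
    rw [Lagrange.eval_basis_of_ne hjk.symm hj, mul_zero, zero_mul]

/-- The `j`-th Fourier coefficient of `f` with respect to the orthogonal polynomials `p`. -/
noncomputable def discCoeff (d : ℕ) (lam w : ℕ → ℝ) (p : ℕ → ℝ[X]) (f : ℝ[X]) (j : ℕ) : ℝ :=
  discInner (range (d + 1)) lam w f (p j) / discInner (range (d + 1)) lam w (p j) (p j)

/-- The predistance polynomials of the mesh `lam 0, …, lam d` with weights `w 0, …, w d`: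
orthogonal polynomials `p 0, …, p d` with `deg (p i) = i`, normalized by
`‖p i‖² = p i (lam 0)`. The weights may have any sign, as long as they do not vanish. -/
structure IsPredistance (d : ℕ) (lam w : ℕ → ℝ) (p : ℕ → ℝ[X]) : Prop where
  injOn : Set.InjOn lam (Set.Iic d)
  weight_ne_zero : ∀ i ≤ d, w i ≠ 0
  degree_eq : ∀ i ≤ d, (p i).degree = i
  orthogonal : ∀ i ≤ d, ∀ j ≤ d, i ≠ j → discInner (range (d + 1)) lam w (p i) (p j) = 0
  norm_sq : ∀ i ≤ d, discInner (range (d + 1)) lam w (p i) (p i) = (p i).eval (lam 0)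

namespace IsPredistance

variable {d : ℕ} {lam w : ℕ → ℝ} {p : ℕ → ℝ[X]}

lemma injOn_range (hp : IsPredistance d lam w p) :
    Set.InjOn lam (range (d + 1) : Finset ℕ) :=
  hp.injOn.mono fun _ hi => mem_range_succ_iff.mp hi

lemma discInner_eq_zero_of_degree_lt (hp : IsPredistance d lam w p) {i : ℕ} (hi : i ≤ d)
    {f : ℝ[X]} (hf : f.degree < i) : discInner (range (d + 1)) lam w f (p i) = 0 := by
  rw [discInner_comm, ← discForm_apply]
  refine linearMap_eq_zero_of_degree_lt _ i (fun j hj => hp.degree_eq j (hj.le.trans hi))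
    (fun j hj => ?_) hf
  rw [discForm_apply, hp.orthogonal i hi j (hj.le.trans hi) hj.ne']

lemma eval_eq_zero_of_orthogonal (hp : IsPredistance d lam w p) {f : ℝ[X]}
    (hf : ∀ j ≤ d, discInner (range (d + 1)) lam w f (p j) = 0) {k : ℕ} (hk : k ≤ d) :
    f.eval (lam k) = 0 := by
  have hmem : k ∈ range (d + 1) := mem_range_succ_iff.mpr hk
  have hbasis : discForm (range (d + 1)) lam w f (Lagrange.basis (range (d + 1)) lam k) = 0 := by
    refine linearMap_eq_zero_of_degree_lt _ (d + 1)
      (fun j hj => hp.degree_eq j (Nat.lt_succ_iff.mp hj)) (fun j hj => ?_) ?_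
    · rw [discForm_apply, hf j (Nat.lt_succ_iff.mp hj)]
    · rw [Lagrange.degree_basis hp.injOn_range hmem, card_range]
      exact_mod_cast d.lt_succ_self
  rw [discForm_apply, discInner_comm, discInner_lagrangeBasis hp.injOn_range w hmem] at hbasis
  exact (mul_eq_zero.mp hbasis).resolve_left (hp.weight_ne_zero k hk)

lemma discInner_self_ne_zero (hp : IsPredistance d lam w p) {i : ℕ} (hi : i ≤ d) :
    discInner (range (d + 1)) lam w (p i) (p i) ≠ 0 := by
  intro hself
  have horth : ∀ j ≤ d, discInner (range (d + 1)) lam w (p i) (p j) = 0 := fun j hj => by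
    rcases eq_or_ne i j with rfl | hij
    exacts [hself, hp.orthogonal i hi j hj hij]
  have hzero : p i = 0 := by
    refine eq_zero_of_degree_lt_of_eval_index_eq_zero (range (d + 1)) hp.injOn_range ?_
      fun k hk => hp.eval_eq_zero_of_orthogonal horth (mem_range_succ_iff.mp hk)
    rw [hp.degree_eq i hi, card_range]
    exact_mod_cast Nat.lt_succ_of_le hi
  exact degree_ne_bot.mp (hp.degree_eq i hi ▸ WithBot.natCast_ne_bot i) hzero

lemma discInner_ne_zero_of_degree_eq (hp : IsPredistance d lam w p) {i : ℕ} (hi : i ≤ d)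
    {f : ℝ[X]} (hf : f.degree = i) : discInner (range (d + 1)) lam w f (p i) ≠ 0 := by
  have hsub := hp.discInner_eq_zero_of_degree_lt hi
    (degree_sub_smul_lt (hp.degree_eq i hi) hf.le)
  rw [← discForm_apply, map_sub, map_smul, LinearMap.sub_apply, LinearMap.smul_apply,
    sub_eq_zero, discForm_apply, discForm_apply] at hsub
  rw [hsub]
  exact smul_ne_zero (div_ne_zero (coeff_ne_zero_of_eq_degree hf)
    (coeff_ne_zero_of_eq_degree (hp.degree_eq i hi))) (hp.discInner_self_ne_zero hi)

lemma eval_eq_eval_sum_discCoeff (hp : IsPredistance d lam w p) (f : ℝ[X]) {k : ℕ}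
    (hk : k ≤ d) :
    f.eval (lam k) = (∑ j ∈ range (d + 1), discCoeff d lam w p f j • p j).eval (lam k) := by
  rw [← sub_eq_zero, ← eval_sub]
  refine hp.eval_eq_zero_of_orthogonal (fun i hi => ?_) hk
  rw [← discForm_apply, map_sub, map_sum, LinearMap.sub_apply, LinearMap.sum_apply,
    Finset.sum_eq_single_of_mem i (mem_range_succ_iff.mpr hi)]
  · simp [discForm_apply, discCoeff, hp.discInner_self_ne_zero hi]
  · intro j hj hji
    simp [discForm_apply, hp.orthogonal j (mem_range_succ_iff.mp hj) i hi hji]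

-- The Lagrange basis polynomial at `lam 0` has all its Fourier coefficients equal to `w 0`,
-- because `‖p j‖² = p j (lam 0)`.
lemma weight_zero_mul_eval_sum (hp : IsPredistance d lam w p) {k : ℕ} (hk : k ≤ d) :
    w 0 * (∑ j ∈ range (d + 1), p j).eval (lam k) = if k = 0 then 1 else 0 := by
  have hmem : 0 ∈ range (d + 1) := mem_range_succ_iff.mpr d.zero_le
  have hcoeff : ∀ j ∈ range (d + 1),
      discCoeff d lam w p (Lagrange.basis (range (d + 1)) lam 0) j = w 0 := fun j hj => by
    have hj' := mem_range_succ_iff.mp hj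
    rw [discCoeff, discInner_lagrangeBasis hp.injOn_range w hmem, ← hp.norm_sq j hj',
      mul_div_cancel_right₀ _ (hp.discInner_self_ne_zero hj')]
  have hexp := hp.eval_eq_eval_sum_discCoeff (Lagrange.basis (range (d + 1)) lam 0) hk
  rw [Finset.sum_congr rfl fun j hj => by rw [hcoeff j hj], ← Finset.smul_sum, eval_smul,
    smul_eq_mul] at hexp
  rw [← hexp]
  split_ifs with hk0
  · rw [hk0, Lagrange.eval_basis_self hp.injOn_range hmem]
  · exact Lagrange.eval_basis_of_ne (Ne.symm hk0) (mem_range_succ_iff.mpr hk)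

lemma discCoeff_mul_X_eq_zero (hp : IsPredistance d lam w p) {i j : ℕ} (hi : i ≤ d)
    (hji : j + 1 < i) : discCoeff d lam w p (p i * X) j = 0 := by
  rw [discCoeff, discInner_mul_X, discInner_comm, hp.discInner_eq_zero_of_degree_lt hi,
    zero_div]
  rw [degree_mul, hp.degree_eq j (by lia), degree_X]
  exact_mod_cast hji

lemma discCoeff_succ_mul_X_ne_zero (hp : IsPredistance d lam w p) {i : ℕ} (hi : i < d) :
    discCoeff d lam w p (p (i + 1) * X) i ≠ 0 := by
  refine div_ne_zero ?_ (hp.discInner_self_ne_zero hi.le)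
  rw [discInner_mul_X, discInner_comm]
  refine hp.discInner_ne_zero_of_degree_eq hi ?_
  rw [degree_mul, hp.degree_eq i hi.le, degree_X]
  rfl

end IsPredistance

end OrthogonalPolynomials

section SpectralDecomposition

/-- The average over `S` of the local multiplicities `m_u(λ_i) = (E i) u u`. -/
noncomputable def avgLocalMult {n : Type*} (E : ℕ → Matrix n n ℝ) (S : Finset n) (i : ℕ) : ℝ :=
  (∑ u ∈ S, E i u u) / (S.card : ℝ)

lemma nonempty_of_avgLocalMult_ne_zero {n : Type*} {E : ℕ → Matrix n n ℝ} {S : Finset n} {i : ℕ}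
    (h : avgLocalMult E S i ≠ 0) : S.Nonempty := by
  rw [Finset.nonempty_iff_ne_empty]
  rintro rfl
  simp [avgLocalMult] at h

variable {n : Type*} [Fintype n] [DecidableEq n]

/-- The spectral decomposition of a real symmetric matrix `M`: its distinct eigenvalues
`lam 0 > ⋯ > lam d`, and the orthogonal projections `E 0, …, E d` onto their eigenspaces. -/
structure IsSpectralDecomposition (M : Matrix n n ℝ) (d : ℕ) (lam : ℕ → ℝ)
    (E : ℕ → Matrix n n ℝ) : Prop where
  strictAntiOn : StrictAntiOn lam (Set.Iic d)
  isSymm : ∀ i ≤ d, (E i).IsSymm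
  sum_eq_one : ∑ i ∈ range (d + 1), E i = 1
  proj_mul_proj : ∀ i ≤ d, ∀ j ≤ d, E i * E j = if i = j then E i else 0
  mul_proj : ∀ i ≤ d, M * E i = lam i • E i
  ne_zero : ∀ i ≤ d, E i ≠ 0

namespace IsSpectralDecomposition

variable {M : Matrix n n ℝ} {d : ℕ} {lam : ℕ → ℝ} {E : ℕ → Matrix n n ℝ}

lemma aeval_mul_proj (hE : IsSpectralDecomposition M d lam E) (f : ℝ[X]) {i : ℕ} (hi : i ≤ d) :
    aeval M f * E i = f.eval (lam i) • E i := by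
  induction f using Polynomial.induction_on with
  | C a => rw [aeval_C, eval_C, Algebra.smul_def]
  | add f g hf hg => rw [map_add, add_mul, hf, hg, eval_add, add_smul]
  | monomial k a ih =>
    rw [pow_succ, ← mul_assoc, map_mul, aeval_X, mul_assoc, hE.mul_proj i hi, Matrix.mul_smul, ih,
      smul_smul, eval_mul_X, mul_comm]

lemma aeval_eq_sum (hE : IsSpectralDecomposition M d lam E) (f : ℝ[X]) :
    aeval M f = ∑ i ∈ range (d + 1), f.eval (lam i) • E i := by
  rw [← mul_one (aeval M f), ← hE.sum_eq_one, Finset.mul_sum]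
  exact Finset.sum_congr rfl fun i hi => hE.aeval_mul_proj f (mem_range_succ_iff.mp hi)

lemma aeval_congr (hE : IsSpectralDecomposition M d lam E) {f g : ℝ[X]}
    (hfg : ∀ i ≤ d, f.eval (lam i) = g.eval (lam i)) : aeval M f = aeval M g := by
  rw [hE.aeval_eq_sum, hE.aeval_eq_sum]
  exact Finset.sum_congr rfl fun i hi => by rw [hfg i (mem_range_succ_iff.mp hi)]

lemma isSymm_aeval (hE : IsSpectralDecomposition M d lam E) (f : ℝ[X]) : (aeval M f).IsSymm := by
  rw [Matrix.IsSymm, hE.aeval_eq_sum, Matrix.transpose_sum]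
  exact Finset.sum_congr rfl fun i hi => by
    rw [Matrix.transpose_smul, hE.isSymm i (mem_range_succ_iff.mp hi)]

lemma proj_mul (hE : IsSpectralDecomposition M d lam E) {i : ℕ} (hi : i ≤ d) :
    E i * M = lam i • E i := by
  have hM : M.IsSymm := by simpa using hE.isSymm_aeval X
  simpa [Matrix.transpose_mul, hM.eq, (hE.isSymm i hi).eq] using
    congrArg Matrix.transpose (hE.mul_proj i hi)

lemma proj_apply_self (hE : IsSpectralDecomposition M d lam E) {i : ℕ} (hi : i ≤ d) (u : n) :
    E i u u = E i u ⬝ᵥ E i u := by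
  conv_lhs => rw [← (hE.proj_mul_proj i hi i hi).trans (if_pos rfl), Matrix.mul_apply]
  exact Finset.sum_congr rfl fun v _ => by rw [(hE.isSymm i hi).apply]

lemma proj_apply_self_nonneg (hE : IsSpectralDecomposition M d lam E) {i : ℕ} (hi : i ≤ d)
    (u : n) : 0 ≤ E i u u := by
  rw [hE.proj_apply_self hi]
  exact Finset.sum_nonneg fun v _ => mul_self_nonneg _

lemma proj_row_eq_zero_of_avgLocalMult_eq_zero (hE : IsSpectralDecomposition M d lam E) {i : ℕ}
    (hi : i ≤ d) {S : Finset n} (h : avgLocalMult E S i = 0) {u : n} (hu : u ∈ S) :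
    E i u = 0 := by
  have hcard : (S.card : ℝ) ≠ 0 := by exact_mod_cast Finset.card_ne_zero_of_mem hu
  have hsum : ∑ u ∈ S, E i u u = 0 := (div_eq_zero_iff.mp h).resolve_right hcard
  rw [← dotProduct_self_eq_zero, ← hE.proj_apply_self hi]
  exact (Finset.sum_eq_zero_iff_of_nonneg fun u _ => hE.proj_apply_self_nonneg hi u).mp hsum u hu

lemma discInner_avgLocalMult (hE : IsSpectralDecomposition M d lam E) (S : Finset n)
    (f g : ℝ[X]) :
    discInner (range (d + 1)) lam (avgLocalMult E S) f g =
      (∑ u ∈ S, aeval M f u ⬝ᵥ aeval M g u) / (S.card : ℝ) := by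
  have hrow : ∀ u, aeval M f u ⬝ᵥ aeval M g u =
      ∑ i ∈ range (d + 1), E i u u * f.eval (lam i) * g.eval (lam i) := fun u => by
    calc aeval M f u ⬝ᵥ aeval M g u = aeval M (f * g) u u := by
          rw [map_mul, Matrix.mul_apply]
          exact Finset.sum_congr rfl fun v _ => by rw [(hE.isSymm_aeval g).apply]
      _ = _ := by
          rw [hE.aeval_eq_sum, Matrix.sum_apply]
          exact Finset.sum_congr rfl fun i _ => by
            rw [Matrix.smul_apply, smul_eq_mul, eval_mul]; ring
  simp only [hrow]
  rw [Finset.sum_comm, Finset.sum_div, discInner]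
  refine Finset.sum_congr rfl fun i _ => ?_
  rw [avgLocalMult, ← Finset.sum_mul, ← Finset.sum_mul]
  ring

lemma exists_eq_of_mulVec_eq_smul (hE : IsSpectralDecomposition M d lam E) {x : n → ℝ} {μ : ℝ}
    (hx0 : x ≠ 0) (hx : M *ᵥ x = μ • x) : ∃ i ≤ d, μ = lam i := by
  by_contra! hne
  refine hx0 ?_
  rw [← Matrix.one_mulVec x, ← hE.sum_eq_one, Matrix.sum_mulVec]
  refine Finset.sum_eq_zero fun j hj => ?_
  have hj' := mem_range_succ_iff.mp hj
  have heq : μ • (E j *ᵥ x) = lam j • (E j *ᵥ x) := by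
    rw [← Matrix.mulVec_smul, ← hx, Matrix.mulVec_mulVec, hE.proj_mul hj', Matrix.smul_mulVec]
  rw [← sub_eq_zero, ← sub_smul] at heq
  exact (smul_eq_zero.mp heq).resolve_left (sub_ne_zero.mpr (hne j hj'))

lemma le_lam_zero (hE : IsSpectralDecomposition M d lam E) {x : n → ℝ} {μ : ℝ} (hx0 : x ≠ 0)
    (hx : M *ᵥ x = μ • x) : μ ≤ lam 0 := by
  obtain ⟨i, hi, rfl⟩ := hE.exists_eq_of_mulVec_eq_smul hx0 hx
  exact hE.strictAntiOn.antitoneOn (Set.mem_Iic.mpr d.zero_le) (Set.mem_Iic.mpr hi) i.zero_le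

lemma aeval_eq_sum_discCoeff (hE : IsSpectralDecomposition M d lam E) {w : ℕ → ℝ}
    {p : ℕ → ℝ[X]} (hp : IsPredistance d lam w p) (f : ℝ[X]) :
    aeval M f = ∑ j ∈ range (d + 1), discCoeff d lam w p f j • aeval M (p j) := by
  rw [hE.aeval_congr fun i hi => hp.eval_eq_eval_sum_discCoeff f hi, map_sum]
  simp only [map_smul]

-- `∑ j, p j` is a multiple of the Hoffman polynomial, which takes `M` to `E 0`.
lemma weight_zero_smul_sum_aeval (hE : IsSpectralDecomposition M d lam E) {w : ℕ → ℝ}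
    {p : ℕ → ℝ[X]} (hp : IsPredistance d lam w p) :
    w 0 • ∑ j ∈ range (d + 1), aeval M (p j) = E 0 := by
  rw [← map_sum, hE.aeval_eq_sum, Finset.smul_sum,
    Finset.sum_congr rfl fun k hk => by
      rw [smul_smul, hp.weight_zero_mul_eval_sum (mem_range_succ_iff.mp hk)]]
  simp

end IsSpectralDecomposition

end SpectralDecomposition

section PerronVector

-- Ground state transform: for `M ≥ 0` and `x > 0` the left side is nonnegative, so `ν ≤ μ`.
lemma sum_mul_sub_sq_eq_of_mulVec_eq_smul {n : Type*} [Fintype n] {M : Matrix n n ℝ}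
    (hM : M.IsSymm) {x t : n → ℝ} {μ ν : ℝ} (hx : M *ᵥ x = μ • x)
    (htx : M *ᵥ (t * x) = ν • (t * x)) :
    ∑ u, ∑ v, M u v * x u * x v * (t u - t v) ^ 2 = 2 * (μ - ν) * ∑ u, (t u * x u) ^ 2 := by
  have hxu : ∀ u, ∑ v, M u v * x v = μ * x u := fun u => congrFun hx u
  have htxu : ∀ u, ∑ v, M u v * (t v * x v) = ν * (t u * x u) := fun u => congrFun htx u
  have hdiag : ∑ u, ∑ v, M u v * x u * x v * t u ^ 2 = μ * ∑ u, (t u * x u) ^ 2 := by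
    rw [Finset.mul_sum]
    refine Finset.sum_congr rfl fun u _ => ?_
    calc ∑ v, M u v * x u * x v * t u ^ 2 = x u * t u ^ 2 * ∑ v, M u v * x v := by
          rw [Finset.mul_sum]
          exact Finset.sum_congr rfl fun v _ => by ring
      _ = μ * (t u * x u) ^ 2 := by rw [hxu]; ring
  have hdiag' : ∑ u, ∑ v, M u v * x u * x v * t v ^ 2 = μ * ∑ u, (t u * x u) ^ 2 := by
    rw [← hdiag, Finset.sum_comm]
    exact Finset.sum_congr rfl fun u _ => Finset.sum_congr rfl fun v _ => by
      rw [hM.apply]; ring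
  have hcross : ∑ u, ∑ v, M u v * x u * x v * (t u * t v) = ν * ∑ u, (t u * x u) ^ 2 := by
    rw [Finset.mul_sum]
    refine Finset.sum_congr rfl fun u _ => ?_
    calc ∑ v, M u v * x u * x v * (t u * t v) = x u * t u * ∑ v, M u v * (t v * x v) := by
          rw [Finset.mul_sum]
          exact Finset.sum_congr rfl fun v _ => by ring
      _ = ν * (t u * x u) ^ 2 := by rw [htxu]; ring
  calc ∑ u, ∑ v, M u v * x u * x v * (t u - t v) ^ 2
      = ∑ u, ∑ v, M u v * x u * x v * t u ^ 2 + ∑ u, ∑ v, M u v * x u * x v * t v ^ 2 -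
          2 * ∑ u, ∑ v, M u v * x u * x v * (t u * t v) := by
        simp only [Finset.mul_sum, ← Finset.sum_add_distrib, ← Finset.sum_sub_distrib]
        exact Finset.sum_congr rfl fun u _ => Finset.sum_congr rfl fun v _ => by ring
    _ = 2 * (μ - ν) * ∑ u, (t u * x u) ^ 2 := by rw [hdiag, hdiag', hcross]; ring

variable {V : Type*} [Fintype V] {G : SimpleGraph V} [DecidableRel G.Adj]

lemma eq_of_adj_of_mulVec_eq_smul {x t : V → ℝ} {μ ν : ℝ} (hpos : ∀ v, 0 < x v)
    (hx : G.adjMatrix ℝ *ᵥ x = μ • x) (htx : G.adjMatrix ℝ *ᵥ (t * x) = ν • (t * x))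
    (hμν : μ ≤ ν) {u v : V} (huv : G.Adj u v) : t u = t v := by
  have hnonneg : ∀ u v, 0 ≤ G.adjMatrix ℝ u v * x u * x v * (t u - t v) ^ 2 := fun u v => by
    have hA : 0 ≤ G.adjMatrix ℝ u v := by
      rw [SimpleGraph.adjMatrix_apply]
      split_ifs <;> norm_num
    have hu := (hpos u).le
    have hv := (hpos v).le
    positivity
  have hle : ∑ u, ∑ v, G.adjMatrix ℝ u v * x u * x v * (t u - t v) ^ 2 ≤ 0 := by
    rw [sum_mul_sub_sq_eq_of_mulVec_eq_smul G.isSymm_adjMatrix hx htx]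
    exact mul_nonpos_of_nonpos_of_nonneg (by linarith)
      (Finset.sum_nonneg fun _ _ => sq_nonneg _)
  have hrows := (Finset.sum_eq_zero_iff_of_nonneg fun u _ =>
    Finset.sum_nonneg fun v _ => hnonneg u v).mp
    (hle.antisymm (Finset.sum_nonneg fun u _ => Finset.sum_nonneg fun v _ => hnonneg u v))
  have hterm := (Finset.sum_eq_zero_iff_of_nonneg fun v _ => hnonneg u v).mp
    (hrows u (mem_univ u)) v (mem_univ v)
  simpa [huv, (hpos u).ne', (hpos v).ne', sub_eq_zero] using hterm

lemma exists_eq_smul_of_mulVec_eq_smul (hconn : G.Connected) {x y : V → ℝ} {μ ν : ℝ}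
    (hpos : ∀ v, 0 < x v) (hx : G.adjMatrix ℝ *ᵥ x = μ • x) (hy : G.adjMatrix ℝ *ᵥ y = ν • y)
    (hμν : μ ≤ ν) : ∃ c : ℝ, y = c • x := by
  obtain ⟨o⟩ := hconn.nonempty
  have hyx : y / x * x = y := funext fun v => div_mul_cancel₀ _ (hpos v).ne'
  have hconst : ∀ u, (y / x) u = (y / x) o := fun u => by
    obtain ⟨walk⟩ := hconn u o
    induction walk with
    | nil => rfl
    | cons huv _ ih =>
      exact (eq_of_adj_of_mulVec_eq_smul hpos hx (hyx.symm ▸ hy) hμν huv).trans ih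
  refine ⟨(y / x) o, ?_⟩
  rw [← hyx]
  ext u
  simp [hconst u, (hpos _).ne']

lemma IsSpectralDecomposition.exists_proj_zero_eq [DecidableEq V] {d : ℕ} {lam : ℕ → ℝ}
    {E : ℕ → Matrix V V ℝ} (hE : IsSpectralDecomposition (G.adjMatrix ℝ) d lam E)
    (hconn : G.Connected) {x : V → ℝ} {μ : ℝ} (hpos : ∀ v, 0 < x v)
    (hx : G.adjMatrix ℝ *ᵥ x = μ • x) : ∃ c : ℝ, E 0 = c • Matrix.vecMulVec x x := by
  obtain ⟨o⟩ := hconn.nonempty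
  have hμ : μ ≤ lam 0 := hE.le_lam_zero (fun h => (hpos o).ne' (congrFun h o)) hx
  have hcol : ∀ w, ∃ c : ℝ, (fun u => E 0 u w) = c • x := fun w =>
    exists_eq_smul_of_mulVec_eq_smul hconn hpos hx
      (funext fun u => congrFun (congrFun (hE.mul_proj 0 d.zero_le) u) w) hμ
  choose c hc using hcol
  have happly : ∀ u w, E 0 u w = c w * x u := fun u w => congrFun (hc w) u
  have hsymm : ∀ w, c w * x o = c o * x w := fun w => by
    rw [← happly, ← happly, (hE.isSymm 0 d.zero_le).apply]
  refine ⟨c o / x o, ?_⟩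
  ext u w
  rw [happly, eq_div_of_mul_eq (hpos o).ne' (hsymm w), Matrix.smul_apply,
    Matrix.vecMulVec_apply, smul_eq_mul]
  ring

end PerronVector

section DistanceMatrix

/-- The distance-`i` matrix `A_i` of a graph: the 0-1 matrix whose row `u` indicates `Γ_i(u)`. -/
noncomputable def distMatrix {V : Type*} (G : SimpleGraph V) (i : ℕ) : Matrix V V ℝ :=
  Matrix.of fun u v => if G.dist u v = i then 1 else 0

variable {V : Type*} {G : SimpleGraph V}

lemma distMatrix_apply (i : ℕ) (u v : V) :
    distMatrix G i u v = if G.dist u v = i then 1 else 0 :=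
  rfl

lemma distMatrix_zero [DecidableEq V] (hconn : G.Connected) : distMatrix G 0 = 1 := by
  ext u v
  rw [distMatrix_apply, Matrix.one_apply]
  exact if_congr hconn.dist_eq_zero_iff rfl rfl

variable [Fintype V] [DecidableEq V]

lemma sum_distMatrix_apply (i : ℕ) (u : V) (s : Finset V) :
    ∑ w ∈ s, distMatrix G i u w = (sphere G u i ∩ s).card := by
  simp_rw [distMatrix_apply, Finset.sum_boole, sphere, Finset.filter_inter, Finset.univ_inter]

lemma distMatrix_dotProduct_self (i : ℕ) (u : V) :
    distMatrix G i u ⬝ᵥ distMatrix G i u = (sphere G u i).card := by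
  have hsq : ∀ w, distMatrix G i u w * distMatrix G i u w = distMatrix G i u w := fun w => by
    simp [distMatrix_apply]
  simp_rw [dotProduct, hsq, sum_distMatrix_apply, Finset.inter_univ]

variable [DecidableRel G.Adj]

lemma aeval_adjMatrix_mul_X_apply (f : ℝ[X]) (u v : V) :
    aeval (G.adjMatrix ℝ) (f * X) u v =
      ∑ w ∈ G.neighborFinset v, aeval (G.adjMatrix ℝ) f u w := by
  rw [map_mul, aeval_X, SimpleGraph.mul_adjMatrix_apply]

lemma aeval_adjMatrix_apply_eq_zero {f : ℝ[X]} {u v : V} (hf : f.degree < G.dist u v) :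
    aeval (G.adjMatrix ℝ) f u v = 0 := by
  have hpow : ∀ k < G.dist u v, aeval (G.adjMatrix ℝ) (X ^ k : ℝ[X]) u v = 0 := fun k hk => by
    rw [map_pow, aeval_X, SimpleGraph.adjMatrix_pow_apply_eq_card_walk, Nat.cast_eq_zero,
      Fintype.card_eq_zero_iff, Set.isEmpty_coe_sort, Set.eq_empty_iff_forall_notMem]
    exact fun walk hwalk => hk.not_ge (hwalk ▸ SimpleGraph.dist_le walk)
  exact linearMap_eq_zero_of_degree_lt
    (Matrix.entryLinearMap ℝ ℝ u v ∘ₗ (aeval (G.adjMatrix ℝ)).toLinearMap) _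
    (fun i _ => degree_X_pow i) hpow hf

end DistanceMatrix

section SpectralSide

variable {V : Type*} [Fintype V] [DecidableEq V]

/-- A set `S` of vertices of a connected graph from which the Perron projection looks radial:
for `u ∈ S` the entry `E 0 u v` is proportional to `g (G.dist u v)`. The polynomials `p` are
the predistance polynomials of the average local spectrum over `S`. For a regular graph one has
`g = 1`. -/
structure IsSpectralSide (G : SimpleGraph V) [DecidableRel G.Adj] (d : ℕ) (lam : ℕ → ℝ)
    (E : ℕ → Matrix V V ℝ) (S : Finset V) (p : ℕ → ℝ[X]) (g : ℕ → ℝ) : Prop where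
  connected : G.Connected
  decomposition : IsSpectralDecomposition (G.adjMatrix ℝ) d lam E
  predistance : IsPredistance d lam (avgLocalMult E S) p
  profile_ne_zero : ∀ i, g i ≠ 0
  profile_zero : g 0 = 1
  perron : ∃ e : ℝ, ∀ u ∈ S, ∀ v, E 0 u v = e * g (G.dist u v)

namespace IsSpectralSide

variable {G : SimpleGraph V} [DecidableRel G.Adj] {d : ℕ} {lam : ℕ → ℝ} {E : ℕ → Matrix V V ℝ}
  {S : Finset V} {p : ℕ → ℝ[X]} {g : ℕ → ℝ}

lemma card_pos (h : IsSpectralSide G d lam E S p g) : 0 < (S.card : ℝ) :=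
  Nat.cast_pos.mpr (nonempty_of_avgLocalMult_ne_zero
    (h.predistance.weight_ne_zero 0 d.zero_le)).card_pos

lemma sum_aeval_apply (h : IsSpectralSide G d lam E S p g) {u : V} (hu : u ∈ S) (v : V) :
    ∑ j ∈ range (d + 1), aeval (G.adjMatrix ℝ) (p j) u v = g (G.dist u v) := by
  obtain ⟨e, he⟩ := h.perron
  have hweight : avgLocalMult E S 0 = e := by
    rw [avgLocalMult, Finset.sum_congr rfl fun v hv => by
      rw [he v hv, SimpleGraph.dist_self, h.profile_zero, mul_one], Finset.sum_const, nsmul_eq_mul,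
      mul_div_cancel_left₀ _ h.card_pos.ne']
  have hentry := congrFun
    (congrFun (h.decomposition.weight_zero_smul_sum_aeval h.predistance) u) v
  rw [Matrix.smul_apply, Matrix.sum_apply, he u hu v, smul_eq_mul, ← hweight] at hentry
  exact mul_left_cancel₀ (h.predistance.weight_ne_zero 0 d.zero_le) hentry

lemma aeval_apply_eq_zero_of_lt_dist (h : IsSpectralSide G d lam E S p g) {i : ℕ} (hi : i ≤ d)
    {u v : V} (huv : i < G.dist u v) : aeval (G.adjMatrix ℝ) (p i) u v = 0 :=
  aeval_adjMatrix_apply_eq_zero <| by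
    rw [h.predistance.degree_eq i hi]
    exact_mod_cast huv

lemma dist_le (h : IsSpectralSide G d lam E S p g) {u : V} (hu : u ∈ S) (v : V) :
    G.dist u v ≤ d := by
  by_contra! hlt
  refine h.profile_ne_zero (G.dist u v) ?_
  rw [← h.sum_aeval_apply hu v]
  refine Finset.sum_eq_zero fun j hj => ?_
  have hj' := mem_range_succ_iff.mp hj
  exact h.aeval_apply_eq_zero_of_lt_dist hj' (hj'.trans_lt hlt)

lemma aeval_apply_of_dist_eq (h : IsSpectralSide G d lam E S p g) {i : ℕ} (hi : i ≤ d) {u : V}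
    (hu : u ∈ S)
    (habove : ∀ j, i < j → j ≤ d → aeval (G.adjMatrix ℝ) (p j) u = g j • distMatrix G j u)
    {v : V} (huv : G.dist u v = i) : aeval (G.adjMatrix ℝ) (p i) u v = g i := by
  rw [← huv, ← h.sum_aeval_apply hu v, huv,
    Finset.sum_eq_single_of_mem i (mem_range_succ_iff.mpr hi)]
  intro j hj hji
  have hj' := mem_range_succ_iff.mp hj
  rcases hji.lt_or_gt with hlt | hgt
  · exact h.aeval_apply_eq_zero_of_lt_dist hj' (huv ▸ hlt)
  · rw [habove j hgt hj', Pi.smul_apply, distMatrix_apply, if_neg (huv ▸ hgt.ne), smul_zero]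

lemma aeval_last_apply_of_dist_eq (h : IsSpectralSide G d lam E S p g) {u : V} (hu : u ∈ S)
    {v : V} (huv : G.dist u v = d) : aeval (G.adjMatrix ℝ) (p d) u v = g d :=
  h.aeval_apply_of_dist_eq le_rfl hu (fun _ hj hj' => absurd hj hj'.not_gt) huv

lemma dotProduct_aeval_last_self (h : IsSpectralSide G d lam E S p g) {u : V} (hu : u ∈ S) :
    aeval (G.adjMatrix ℝ) (p d) u ⬝ᵥ aeval (G.adjMatrix ℝ) (p d) u =
      g d ^ 2 * (sphere G u d).card +
        (aeval (G.adjMatrix ℝ) (p d) u - g d • distMatrix G d u) ⬝ᵥ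
          (aeval (G.adjMatrix ℝ) (p d) u - g d • distMatrix G d u) := by
  have hcross : aeval (G.adjMatrix ℝ) (p d) u ⬝ᵥ distMatrix G d u =
      g d * (distMatrix G d u ⬝ᵥ distMatrix G d u) := by
    simp_rw [dotProduct, Finset.mul_sum]
    refine Finset.sum_congr rfl fun v _ => ?_
    by_cases huv : G.dist u v = d
    · simp [distMatrix_apply, huv, h.aeval_last_apply_of_dist_eq hu huv]
    · simp [distMatrix_apply, huv]
  simp only [sub_dotProduct, dotProduct_sub, smul_dotProduct, dotProduct_smul, smul_eq_mul,
    dotProduct_comm (distMatrix G d u) (aeval (G.adjMatrix ℝ) (p d) u), hcross,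
    distMatrix_dotProduct_self]
  ring

lemma excess_eq_iff_aeval_last_row_eq (h : IsSpectralSide G d lam E S p g) :
    g d ^ 2 * (1 / (S.card : ℝ) * ∑ u ∈ S, ((sphere G u d).card : ℝ)) = (p d).eval (lam 0) ↔
      ∀ u ∈ S, aeval (G.adjMatrix ℝ) (p d) u = g d • distMatrix G d u := by
  set r : V → V → ℝ := fun u => aeval (G.adjMatrix ℝ) (p d) u - g d • distMatrix G d u with hr
  have hnonneg : ∀ u ∈ S, 0 ≤ r u ⬝ᵥ r u := fun u _ =>
    Finset.sum_nonneg fun v _ => mul_self_nonneg _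
  have hnorm : (p d).eval (lam 0) =
      g d ^ 2 * (1 / (S.card : ℝ) * ∑ u ∈ S, ((sphere G u d).card : ℝ)) +
        (∑ u ∈ S, r u ⬝ᵥ r u) / S.card := by
    rw [← h.predistance.norm_sq d le_rfl, h.decomposition.discInner_avgLocalMult,
      Finset.sum_congr rfl fun u hu => h.dotProduct_aeval_last_self hu,
      Finset.sum_add_distrib, ← Finset.mul_sum]
    ring
  rw [hnorm, left_eq_add, div_eq_zero_iff, or_iff_left h.card_pos.ne',
    Finset.sum_eq_zero_iff_of_nonneg hnonneg]
  simp only [dotProduct_self_eq_zero, hr, sub_eq_zero]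

lemma aeval_apply_eq_sum (h : IsSpectralSide G d lam E S p g) (f : ℝ[X]) (u v : V) :
    aeval (G.adjMatrix ℝ) f u v = ∑ j ∈ range (d + 1),
      discCoeff d lam (avgLocalMult E S) p f j * aeval (G.adjMatrix ℝ) (p j) u v := by
  rw [h.decomposition.aeval_eq_sum_discCoeff h.predistance, Matrix.sum_apply]
  rfl

lemma aeval_row_eq_of_forall_gt (h : IsSpectralSide G d lam E S p g) {i : ℕ} (hi : i < d) {u : V}
    (hu : u ∈ S)
    (habove : ∀ j, i < j → j ≤ d → aeval (G.adjMatrix ℝ) (p j) u = g j • distMatrix G j u) :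
    aeval (G.adjMatrix ℝ) (p i) u = g i • distMatrix G i u := by
  ext v
  rw [Pi.smul_apply, distMatrix_apply, smul_eq_mul, mul_ite, mul_one, mul_zero]
  rcases lt_trichotomy (G.dist u v) i with hlt | heq | hgt
  · have hsucc : aeval (G.adjMatrix ℝ) (p (i + 1) * X) u v = 0 := by
      rw [aeval_adjMatrix_mul_X_apply]
      refine Finset.sum_eq_zero fun w hw => ?_
      have hadj := (G.mem_neighborFinset v w).mp hw
      have hdist := h.connected.dist_triangle (u := u) (v := v) (w := w)
      rw [SimpleGraph.dist_eq_one_iff_adj.mpr hadj] at hdist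
      rw [habove (i + 1) i.lt_succ_self hi, Pi.smul_apply, distMatrix_apply, if_neg (by lia),
        smul_zero]
    rw [h.aeval_apply_eq_sum, Finset.sum_eq_single_of_mem i (mem_range_succ_iff.mpr hi.le)] at hsucc
    · rw [if_neg hlt.ne]
      exact (mul_eq_zero.mp hsucc).resolve_left (h.predistance.discCoeff_succ_mul_X_ne_zero hi)
    · intro j hj hji
      rcases hji.lt_or_gt with hji | hij
      · rw [h.predistance.discCoeff_mul_X_eq_zero hi (by lia), zero_mul]
      · rw [habove j hij (mem_range_succ_iff.mp hj), Pi.smul_apply, distMatrix_apply,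
          if_neg (by lia), smul_zero, mul_zero]
  · rw [if_pos heq, h.aeval_apply_of_dist_eq hi.le hu habove heq]
  · rw [if_neg hgt.ne', h.aeval_apply_eq_zero_of_lt_dist hi.le hgt]

lemma aeval_row_eq_of_last (h : IsSpectralSide G d lam E S p g) {u : V} (hu : u ∈ S)
    (hlast : aeval (G.adjMatrix ℝ) (p d) u = g d • distMatrix G d u) {i : ℕ} (hi : i ≤ d) :
    aeval (G.adjMatrix ℝ) (p i) u = g i • distMatrix G i u := by
  induction hk : d - i using Nat.strong_induction_on generalizing i with
  | _ k ih =>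
    rcases hi.eq_or_lt with rfl | hlt
    · exact hlast
    · exact h.aeval_row_eq_of_forall_gt hlt hu fun j hij hjd => ih (d - j) (by lia) hjd rfl

lemma mul_card_sphere_inter_neighborFinset (h : IsSpectralSide G d lam E S p g) {u : V}
    (hu : u ∈ S)
    (hrow : ∀ j ≤ d, aeval (G.adjMatrix ℝ) (p j) u = g j • distMatrix G j u) {i : ℕ}
    (hi : i ≤ d) (v : V) :
    g i * (sphere G u i ∩ G.neighborFinset v).card =
      discCoeff d lam (avgLocalMult E S) p (p i * X) (G.dist u v) * g (G.dist u v) := by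
  calc g i * (sphere G u i ∩ G.neighborFinset v).card
      = aeval (G.adjMatrix ℝ) (p i * X) u v := by
        rw [aeval_adjMatrix_mul_X_apply, hrow i hi, ← sum_distMatrix_apply, Finset.mul_sum]
        rfl
    _ = _ := by
        rw [h.aeval_apply_eq_sum, Finset.sum_eq_single_of_mem (G.dist u v)
          (mem_range_succ_iff.mpr (h.dist_le hu v))]
        · rw [hrow _ (h.dist_le hu v), Pi.smul_apply, distMatrix_apply, if_pos rfl, smul_eq_mul,
            mul_one]
        · intro j hj hj'
          rw [hrow j (mem_range_succ_iff.mp hj), Pi.smul_apply, distMatrix_apply, if_neg hj'.symm,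
            smul_zero, mul_zero]

lemma exists_card_sphere_inter_neighborFinset (h : IsSpectralSide G d lam E S p g)
    (hlast : ∀ u ∈ S, aeval (G.adjMatrix ℝ) (p d) u = g d • distMatrix G d u) :
    ∃ a : ℕ → ℕ → ℕ, ∀ u ∈ S, ∀ i v,
      (sphere G u i ∩ G.neighborFinset v).card = a i (G.dist u v) := by
  have hfactor : ∀ i, Function.FactorsThrough
      (fun q : S × V => (sphere G q.1 i ∩ G.neighborFinset q.2).card)
      (fun q => G.dist q.1 q.2) := by
    rintro i ⟨⟨u, hu⟩, v⟩ ⟨⟨u', hu'⟩, v'⟩ (hdist : G.dist u v = G.dist u' v')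
    by_cases hi : i ≤ d
    · have hcard := fun u hu v => h.mul_card_sphere_inter_neighborFinset hu
        (fun j hj => h.aeval_row_eq_of_last hu (hlast u hu) hj) hi v
      have heq := (hcard u hu v).trans (hdist ▸ (hcard u' hu' v').symm)
      exact_mod_cast mul_left_cancel₀ (h.profile_ne_zero i) heq
    · have hempty : ∀ u ∈ S, sphere G u i = ∅ := fun u hu =>
        Finset.filter_eq_empty_iff.mpr fun w _ hw => hi (hw ▸ h.dist_le hu w)
      simp [hempty u hu, hempty u' hu']
  choose a ha using fun i => (Function.factorsThrough_iff _).mp (hfactor i)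
  exact ⟨a, fun u hu i v => congrFun (ha i) (⟨u, hu⟩, v)⟩

end IsSpectralSide

end SpectralSide

section Bipartition

variable {V : Type*} [Fintype V] [DecidableEq V]

/-- `V1` and `V2` are the two stable sets of a bipartite graph, covering all the vertices. -/
structure IsBipartition (G : SimpleGraph V) (V1 V2 : Finset V) : Prop where
  isBipartiteWith : G.IsBipartiteWith (V1 : Set V) V2
  union_eq : V1 ∪ V2 = univ

namespace IsBipartition

variable {G : SimpleGraph V} {V1 V2 : Finset V}

lemma of_stable (hdisj : Disjoint V1 V2) (hunion : V1 ∪ V2 = univ)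
    (hstable1 : ∀ u ∈ V1, ∀ v ∈ V1, ¬ G.Adj u v) (hstable2 : ∀ u ∈ V2, ∀ v ∈ V2, ¬ G.Adj u v) :
    IsBipartition G V1 V2 := by
  refine ⟨⟨Finset.disjoint_coe.mpr hdisj, fun u v huv => ?_⟩, hunion⟩
  rcases mem_union.mp (hunion.symm ▸ mem_univ u) with hu | hu <;>
    rcases mem_union.mp (hunion.symm ▸ mem_univ v) with hv | hv
  · exact absurd huv (hstable1 u hu v hv)
  · exact .inl ⟨hu, hv⟩
  · exact .inr ⟨hu, hv⟩
  · exact absurd huv (hstable2 u hu v hv)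

lemma symm (hB : IsBipartition G V1 V2) : IsBipartition G V2 V1 :=
  ⟨hB.isBipartiteWith.symm, (union_comm V2 V1).trans hB.union_eq⟩

lemma notMem_left_iff (hB : IsBipartition G V1 V2) {v : V} : v ∉ V1 ↔ v ∈ V2 :=
  ⟨fun h => (mem_union.mp (hB.union_eq.symm ▸ mem_univ v)).resolve_left h,
    fun h2 h1 => Set.disjoint_left.mp hB.isBipartiteWith.disjoint h1 h2⟩

lemma mem_left_iff_of_adj (hB : IsBipartition G V1 V2) {u v : V} (huv : G.Adj u v) :
    u ∈ V1 ↔ v ∈ V2 := by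
  refine ⟨fun hu => hB.isBipartiteWith.mem_of_mem_adj hu huv, fun hv => ?_⟩
  exact hB.isBipartiteWith.symm.mem_of_mem_adj hv huv.symm

lemma even_length_iff (hB : IsBipartition G V1 V2) {u v : V} (walk : G.Walk u v) :
    Even walk.length ↔ (u ∈ V1 ↔ v ∈ V1) := by
  induction walk with
  | nil => simp
  | cons huv _ ih =>
    rw [SimpleGraph.Walk.length_cons, Nat.even_add_one, ih, hB.mem_left_iff_of_adj huv,
      ← hB.notMem_left_iff]
    tauto

lemma even_dist_iff (hB : IsBipartition G V1 V2) (hconn : G.Connected) (u v : V) :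
    Even (G.dist u v) ↔ (u ∈ V1 ↔ v ∈ V1) := by
  obtain ⟨walk, hwalk⟩ := hconn.exists_walk_length_eq_dist u v
  rw [← hwalk, hB.even_length_iff]

lemma dist_ne_dist_of_adj (hB : IsBipartition G V1 V2) (hconn : G.Connected) (u : V) {v w : V}
    (hvw : G.Adj v w) : G.dist u v ≠ G.dist u w := fun h => by
  have hv := hB.even_dist_iff hconn u v
  rw [h, hB.even_dist_iff hconn, hB.mem_left_iff_of_adj hvw, ← hB.notMem_left_iff] at hv
  tauto

end IsBipartition

end Bipartition

section IntersectionNumbers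

variable {V : Type*} [Fintype V] [DecidableEq V]

/-- The graph is distance-regular around every `u ∈ S`, with intersection numbers
`c_i(u, v) = c i` and `b_i(u, v) = b i` that are the same for all `u ∈ S`. -/
def HasIntersectionNumbers (G : SimpleGraph V) [DecidableRel G.Adj] (S : Finset V)
    (c b : ℕ → ℕ) : Prop :=
  ∀ u ∈ S, ∀ v : V,
    (sphere G u (G.dist u v - 1) ∩ G.neighborFinset v).card = c (G.dist u v) ∧
    (sphere G u (G.dist u v + 1) ∩ G.neighborFinset v).card = b (G.dist u v)

/-- The polynomials `q 0 = 1`, `q 1 = X`, `q (i + 2) = X q (i + 1) - b i c (i + 1) q i`: the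
distance polynomials `c 1 ⋯ c i p_i` of an intersection array of a bipartite graph, scaled so
that no division by the `c i` occurs. -/
noncomputable def scaledDistPoly (c b : ℕ → ℕ) : ℕ → ℝ[X]
  | 0 => 1
  | 1 => X
  | i + 2 => scaledDistPoly c b (i + 1) * X - C (b i * c (i + 1) : ℝ) * scaledDistPoly c b i

lemma scaledDistPoly_add_two (c b : ℕ → ℕ) (i : ℕ) : scaledDistPoly c b (i + 2) =
    scaledDistPoly c b (i + 1) * X - C (b i * c (i + 1) : ℝ) * scaledDistPoly c b i :=
  rfl

lemma degree_scaledDistPoly (c b : ℕ → ℕ) (i : ℕ) : (scaledDistPoly c b i).degree = i := by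
  induction i using Nat.twoStepInduction with
  | zero => exact degree_one
  | one => exact degree_X
  | more i ih ih' =>
    have hX : (scaledDistPoly c b (i + 1) * X).degree = ((i + 2 : ℕ) : WithBot ℕ) := by
      rw [degree_mul, ih', degree_X]
      rfl
    rw [scaledDistPoly_add_two, degree_sub_eq_left_of_degree_lt, hX]
    rw [hX]
    rw [C_mul']
    refine (degree_smul_le _ _).trans_lt ?_
    rw [ih]
    exact_mod_cast Nat.lt_add_of_pos_right two_pos

namespace HasIntersectionNumbers

variable {G : SimpleGraph V} [DecidableRel G.Adj] {V1 V2 : Finset V} {c b : ℕ → ℕ}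

lemma card_sphere_inter_neighborFinset (h : HasIntersectionNumbers G V1 c b)
    (hB : IsBipartition G V1 V2) (hconn : G.Connected) {u : V} (hu : u ∈ V1) (i : ℕ) (v : V) :
    (sphere G u i ∩ G.neighborFinset v).card =
      if G.dist u v = i + 1 then c (i + 1) else if G.dist u v + 1 = i then b (G.dist u v)
      else 0 := by
  split_ifs with hc hb
  · simpa [hc] using (h u hu v).1
  · simpa [hb] using (h u hu v).2
  · rw [Finset.card_eq_zero, Finset.eq_empty_iff_forall_notMem]
    intro w hw
    simp only [mem_inter, sphere, mem_filter_univ, SimpleGraph.mem_neighborFinset] at hw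
    obtain ⟨hw, hvw⟩ := hw
    have hne := hB.dist_ne_dist_of_adj hconn u hvw
    have hle := hconn.dist_triangle (u := u) (v := v) (w := w)
    have hge := hconn.dist_triangle (u := u) (v := w) (w := v)
    rw [SimpleGraph.dist_eq_one_iff_adj.mpr hvw] at hle
    rw [SimpleGraph.dist_eq_one_iff_adj.mpr hvw.symm] at hge
    lia

lemma sum_distMatrix_zero_apply (h : HasIntersectionNumbers G V1 c b)
    (hB : IsBipartition G V1 V2) (hconn : G.Connected) {u : V} (hu : u ∈ V1) (v : V) :
    ∑ w ∈ G.neighborFinset v, distMatrix G 0 u w = c 1 * distMatrix G 1 u v := by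
  rw [sum_distMatrix_apply, h.card_sphere_inter_neighborFinset hB hconn hu, distMatrix_apply]
  split_ifs <;> simp_all

lemma sum_distMatrix_succ_apply (h : HasIntersectionNumbers G V1 c b)
    (hB : IsBipartition G V1 V2) (hconn : G.Connected) {u : V} (hu : u ∈ V1) (i : ℕ) (v : V) :
    ∑ w ∈ G.neighborFinset v, distMatrix G (i + 1) u w =
      c (i + 2) * distMatrix G (i + 2) u v + b i * distMatrix G i u v := by
  rw [sum_distMatrix_apply, h.card_sphere_inter_neighborFinset hB hconn hu, distMatrix_apply,
    distMatrix_apply]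
  simp only [add_left_inj, add_assoc, one_add_one_eq_two]
  split_ifs <;> simp_all

lemma aeval_scaledDistPoly (h : HasIntersectionNumbers G V1 c b)
    (hB : IsBipartition G V1 V2) (hconn : G.Connected) {u : V} (hu : u ∈ V1) (i : ℕ) :
    aeval (G.adjMatrix ℝ) (scaledDistPoly c b i) u =
      (∏ j ∈ range i, (c (j + 1) : ℝ)) • distMatrix G i u := by
  induction i using Nat.twoStepInduction with
  | zero => simp [scaledDistPoly, distMatrix_zero hconn]
  | one =>
    ext v
    rw [scaledDistPoly, ← one_mul X, aeval_adjMatrix_mul_X_apply, map_one,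
      ← distMatrix_zero hconn, h.sum_distMatrix_zero_apply hB hconn hu]
    simp
  | more i ih ih' =>
    ext v
    have hX : aeval (G.adjMatrix ℝ) (scaledDistPoly c b (i + 1) * X) u v =
        (∏ j ∈ range (i + 1), (c (j + 1) : ℝ)) *
          (c (i + 2) * distMatrix G (i + 2) u v + b i * distMatrix G i u v) := by
      rw [aeval_adjMatrix_mul_X_apply, ih', ← h.sum_distMatrix_succ_apply hB hconn hu,
        Finset.mul_sum]
      rfl
    rw [scaledDistPoly_add_two, map_sub, C_mul', map_smul, Matrix.sub_apply, hX,
      Matrix.smul_apply, ih, Pi.smul_apply, Pi.smul_apply, Finset.prod_range_succ _ (i + 1),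
      Finset.prod_range_succ]
    simp only [smul_eq_mul]
    ring

end HasIntersectionNumbers

end IntersectionNumbers

section ExcessTheorem

variable {V : Type*} [Fintype V] [DecidableEq V] {G : SimpleGraph V} [DecidableRel G.Adj] {d : ℕ}
  {lam : ℕ → ℝ} {E : ℕ → Matrix V V ℝ} {S : Finset V} {p : ℕ → ℝ[X]} {g : ℕ → ℝ}

namespace IsSpectralSide

lemma dotProduct_distMatrix_aeval_eq_zero (h : IsSpectralSide G d lam E S p g) {j : ℕ}
    (hj : j < d) (u : V) : distMatrix G d u ⬝ᵥ aeval (G.adjMatrix ℝ) (p j) u = 0 :=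
  Finset.sum_eq_zero fun v _ => by
    rw [distMatrix_apply]
    split_ifs with huv
    · rw [h.aeval_apply_eq_zero_of_lt_dist hj.le (huv ▸ hj), mul_zero]
    · rw [zero_mul]

-- A suitable `p d - s • q` is orthogonal to `p 0, …, p d`, so `p d` and `s • q` agree on the mesh.
lemma aeval_last_row_eq_of_degree_eq (h : IsSpectralSide G d lam E S p g) {q : ℝ[X]}
    (hq : q.degree = d) {t : ℝ}
    (hrow : ∀ u ∈ S, aeval (G.adjMatrix ℝ) q u = t • distMatrix G d u) {u : V} (hu : u ∈ S) :
    aeval (G.adjMatrix ℝ) (p d) u = g d • distMatrix G d u := by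
  set s := (p d).coeff d / q.coeff d
  have horth : ∀ j ≤ d,
      discInner (range (d + 1)) lam (avgLocalMult E S) (p d - s • q) (p j) = 0 := fun j hj => by
    rcases hj.eq_or_lt with rfl | hlt
    · exact h.predistance.discInner_eq_zero_of_degree_lt le_rfl
        (degree_sub_smul_lt hq (h.predistance.degree_eq j le_rfl).le)
    · have hqj : discInner (range (d + 1)) lam (avgLocalMult E S) q (p j) = 0 := by
        rw [h.decomposition.discInner_avgLocalMult, Finset.sum_eq_zero, zero_div]
        intro u hu
        rw [hrow u hu, smul_dotProduct, h.dotProduct_distMatrix_aeval_eq_zero hlt, smul_zero]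
      rw [← discForm_apply, map_sub, map_smul, LinearMap.sub_apply, LinearMap.smul_apply,
        discForm_apply, discForm_apply, hqj, h.predistance.orthogonal d le_rfl j hj hlt.ne',
        smul_zero, sub_zero]
  have hpq : aeval (G.adjMatrix ℝ) (p d) = s • aeval (G.adjMatrix ℝ) q := by
    rw [← map_smul]
    refine h.decomposition.aeval_congr fun k hk => ?_
    rw [← sub_eq_zero, ← eval_sub, h.predistance.eval_eq_zero_of_orthogonal horth hk]
  ext v
  by_cases huv : G.dist u v = d
  · simp [h.aeval_last_apply_of_dist_eq hu huv, distMatrix_apply, huv]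
  · simp [hpq, hrow u hu, distMatrix_apply, huv]

lemma exists_hasIntersectionNumbers_iff_excess_eq (h : IsSpectralSide G d lam E S p g)
    {T : Finset V} (hB : IsBipartition G S T) :
    (∃ c b, HasIntersectionNumbers G S c b) ↔
      g d ^ 2 * (1 / (S.card : ℝ) * ∑ u ∈ S, ((sphere G u d).card : ℝ)) = (p d).eval (lam 0) := by
  rw [h.excess_eq_iff_aeval_last_row_eq]
  constructor
  · rintro ⟨c, b, hcb⟩ u hu
    exact h.aeval_last_row_eq_of_degree_eq (degree_scaledDistPoly c b d)
      (fun u hu => hcb.aeval_scaledDistPoly hB h.connected hu d) hu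
  · intro hlast
    obtain ⟨a, ha⟩ := h.exists_card_sphere_inter_neighborFinset hlast
    exact ⟨fun k => a (k - 1) k, fun k => a (k + 1) k, fun u hu v => ⟨ha u hu _ v, ha u hu _ v⟩⟩

end IsSpectralSide

end ExcessTheorem

section LocalMultiplicities

variable {V : Type*} [Fintype V] [DecidableEq V] {V1 V2 : Finset V}

/-- The diagonal matrix with entries `1` on `V1` and `-1` off it. For a bipartite graph with
stable set `V1` it anticommutes with the adjacency matrix. -/
def signMatrix (V1 : Finset V) : Matrix V V ℝ :=
  Matrix.diagonal fun v => if v ∈ V1 then 1 else -1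

variable {G : SimpleGraph V}

lemma IsBipartition.trace_signMatrix (hB : IsBipartition G V1 V2) :
    (signMatrix V1).trace = V1.card - V2.card := by
  have hdisj : Disjoint V1 V2 := Finset.disjoint_coe.mp hB.isBipartiteWith.disjoint
  have h1 : ∑ v ∈ V1, (if v ∈ V1 then 1 else -1 : ℝ) = V1.card := by
    rw [Finset.sum_congr rfl fun v hv => if_pos hv, Finset.sum_const, nsmul_one]
  have h2 : ∑ v ∈ V2, (if v ∈ V1 then 1 else -1 : ℝ) = -V2.card := by
    rw [Finset.sum_congr rfl fun v hv => if_neg (hB.notMem_left_iff.mpr hv), Finset.sum_const,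
      nsmul_eq_mul, mul_neg_one]
  rw [signMatrix, Matrix.trace_diagonal, ← hB.union_eq, Finset.sum_union hdisj, h1, h2,
    sub_eq_add_neg]

variable [DecidableRel G.Adj]

lemma IsBipartition.signMatrix_mul_adjMatrix (hB : IsBipartition G V1 V2) :
    signMatrix V1 * G.adjMatrix ℝ = -(G.adjMatrix ℝ * signMatrix V1) := by
  ext u v
  rw [signMatrix, Matrix.neg_apply, Matrix.diagonal_mul, Matrix.mul_diagonal,
    SimpleGraph.adjMatrix_apply]
  by_cases huv : G.Adj u v
  · by_cases hv : v ∈ V1 <;> simp [hB.mem_left_iff_of_adj huv, ← hB.notMem_left_iff, huv, hv]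
  · simp [huv]

variable {d : ℕ} {lam : ℕ → ℝ} {E : ℕ → Matrix V V ℝ}

namespace IsSpectralDecomposition

lemma trace_signMatrix_mul_proj (hE : IsSpectralDecomposition (G.adjMatrix ℝ) d lam E)
    (hB : IsBipartition G V1 V2) {i : ℕ} (hi : i ≤ d) (hlam : lam i ≠ 0) :
    (signMatrix V1 * E i).trace = 0 := by
  have hneg : lam i * (signMatrix V1 * E i).trace = -(lam i * (signMatrix V1 * E i).trace) := by
    calc lam i * (signMatrix V1 * E i).trace = (signMatrix V1 * G.adjMatrix ℝ * E i).trace := by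
          rw [Matrix.mul_assoc, hE.mul_proj i hi, Matrix.mul_smul, Matrix.trace_smul, smul_eq_mul]
      _ = -(signMatrix V1 * E i * G.adjMatrix ℝ).trace := by
          rw [hB.signMatrix_mul_adjMatrix, Matrix.neg_mul, Matrix.trace_neg, Matrix.mul_assoc,
            Matrix.trace_mul_comm]
      _ = -(lam i * (signMatrix V1 * E i).trace) := by
          rw [Matrix.mul_assoc, hE.proj_mul hi, Matrix.mul_smul, Matrix.trace_smul, smul_eq_mul]
  exact (mul_eq_zero.mp (self_eq_neg.mp hneg)).resolve_left hlam

lemma trace_signMatrix_mul_proj_of_lam_eq_zero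
    (hE : IsSpectralDecomposition (G.adjMatrix ℝ) d lam E) (hB : IsBipartition G V1 V2) {j : ℕ}
    (hj : j ≤ d) (hlam : lam j = 0) : (signMatrix V1 * E j).trace = V1.card - V2.card := by
  calc (signMatrix V1 * E j).trace = ∑ i ∈ range (d + 1), (signMatrix V1 * E i).trace := by
        symm
        refine Finset.sum_eq_single_of_mem j (mem_range_succ_iff.mpr hj) fun i hi hij => ?_
        have hi' := mem_range_succ_iff.mp hi
        exact hE.trace_signMatrix_mul_proj hB hi'
          fun h => hij (hE.strictAntiOn.injOn hi' hj (h.trans hlam.symm))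
    _ = V1.card - V2.card := by
        rw [← Matrix.trace_sum, ← Matrix.mul_sum, hE.sum_eq_one, Matrix.mul_one,
          hB.trace_signMatrix]

lemma lam_eq_zero_of_left_rows_eq_zero (hE : IsSpectralDecomposition (G.adjMatrix ℝ) d lam E)
    (hB : IsBipartition G V1 V2) {j : ℕ} (hj : j ≤ d) (hrow : ∀ u ∈ V1, E j u = 0) :
    lam j = 0 := by
  by_contra hlam
  refine hE.ne_zero j hj (funext fun u => ?_)
  by_cases hu : u ∈ V1
  · exact hrow u hu
  · ext v
    have hentry := congrFun (congrFun (hE.mul_proj j hj) u) v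
    rw [SimpleGraph.adjMatrix_mul_apply, Finset.sum_eq_zero, Matrix.smul_apply] at hentry
    · exact (smul_eq_zero.mp hentry.symm).resolve_left hlam
    · intro w hw
      rw [hrow w ((hB.mem_left_iff_of_adj ((G.mem_neighborFinset u w).mp hw).symm).mpr
        (hB.notMem_left_iff.mp hu)), Pi.zero_apply]

lemma avgLocalMult_ne_zero (hE : IsSpectralDecomposition (G.adjMatrix ℝ) d lam E)
    (hB : IsBipartition G V1 V2)
    (hm0 : ∑ i ∈ (range (d + 1)).filter (fun i => lam i = 0), (E i).trace ≠
      |(V1.card : ℝ) - V2.card|) {j : ℕ} (hj : j ≤ d) : avgLocalMult E V1 j ≠ 0 := by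
  intro havg
  have hrow : ∀ u ∈ V1, E j u = 0 := fun u hu =>
    hE.proj_row_eq_zero_of_avgLocalMult_eq_zero hj havg hu
  have hlam := hE.lam_eq_zero_of_left_rows_eq_zero hB hj hrow
  have hkernel : (range (d + 1)).filter (fun i => lam i = 0) = {j} := by
    ext i
    rw [mem_filter, mem_range_succ_iff, mem_singleton]
    exact ⟨fun ⟨hi, h⟩ => hE.strictAntiOn.injOn hi hj (h.trans hlam.symm),
      fun h => h ▸ ⟨hj, hlam⟩⟩
  have hsign : (signMatrix V1 * E j).trace = -(E j).trace := by
    rw [← Matrix.trace_neg]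
    refine Finset.sum_congr rfl fun u _ => ?_
    by_cases hu : u ∈ V1 <;> simp [signMatrix, hu, hrow]
  have hnonneg : 0 ≤ (E j).trace := Finset.sum_nonneg fun u _ => hE.proj_apply_self_nonneg hj u
  rw [hE.trace_signMatrix_mul_proj_of_lam_eq_zero hB hj hlam] at hsign
  exact hm0 (by rw [hkernel, Finset.sum_singleton, hsign, abs_neg, abs_of_nonneg hnonneg])

end IsSpectralDecomposition

end LocalMultiplicities

section Semiregular

variable {V : Type*} [Fintype V] [DecidableEq V]

/-- The graph is bipartite and `(δ1, δ2)`-semiregular with stable sets `V1` and `V2`. -/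
structure IsSemiregularBipartition (G : SimpleGraph V) [DecidableRel G.Adj] (V1 V2 : Finset V)
    (δ1 δ2 : ℕ) : Prop extends IsBipartition G V1 V2 where
  degree_left : ∀ u ∈ V1, G.degree u = δ1
  degree_right : ∀ v ∈ V2, G.degree v = δ2

namespace IsSemiregularBipartition

variable {G : SimpleGraph V} [DecidableRel G.Adj] {V1 V2 : Finset V} {δ1 δ2 : ℕ}

lemma symm (hS : IsSemiregularBipartition G V1 V2 δ1 δ2) :
    IsSemiregularBipartition G V2 V1 δ2 δ1 :=
  ⟨hS.toIsBipartition.symm, hS.degree_right, hS.degree_left⟩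

lemma degree_left_pos (hS : IsSemiregularBipartition G V1 V2 δ1 δ2) (hconn : G.Connected)
    (h1 : V1.Nonempty) (h2 : V2.Nonempty) : 0 < δ1 := by
  obtain ⟨u, hu⟩ := h1
  obtain ⟨v, hv⟩ := h2
  have : Nontrivial V := ⟨u, v, fun huv => hS.notMem_left_iff.mpr hv (huv ▸ hu)⟩
  exact hS.degree_left u hu ▸ hconn.preconnected.degree_pos_of_nontrivial u

lemma adjMatrix_mulVec_sqrt (hS : IsSemiregularBipartition G V1 V2 δ1 δ2) :
    G.adjMatrix ℝ *ᵥ (fun v => if v ∈ V1 then √δ1 else √δ2) =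
      (√δ1 * √δ2) • fun v => if v ∈ V1 then √δ1 else √δ2 := by
  ext u
  rw [SimpleGraph.adjMatrix_mulVec_apply, Pi.smul_apply, smul_eq_mul]
  by_cases hu : u ∈ V1
  · have hnbr : ∀ w ∈ G.neighborFinset u, (if w ∈ V1 then √δ1 else √δ2) = √(δ2 : ℝ) :=
      fun w hw => if_neg (hS.notMem_left_iff.mpr
        ((hS.mem_left_iff_of_adj ((G.mem_neighborFinset u w).mp hw)).mp hu))
    rw [Finset.sum_congr rfl hnbr, Finset.sum_const, G.card_neighborFinset_eq_degree,
      hS.degree_left u hu, if_pos hu, nsmul_eq_mul]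
    nth_rw 1 [← Real.mul_self_sqrt δ1.cast_nonneg]
    ring
  · have hu2 := hS.notMem_left_iff.mp hu
    have hnbr : ∀ w ∈ G.neighborFinset u, (if w ∈ V1 then √δ1 else √δ2) = √(δ1 : ℝ) :=
      fun w hw => if_pos
        ((hS.mem_left_iff_of_adj ((G.mem_neighborFinset u w).mp hw).symm).mpr hu2)
    rw [Finset.sum_congr rfl hnbr, Finset.sum_const, G.card_neighborFinset_eq_degree,
      hS.degree_right u hu2, if_neg hu, nsmul_eq_mul]
    nth_rw 1 [← Real.mul_self_sqrt δ2.cast_nonneg]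
    ring

variable {d : ℕ} {lam : ℕ → ℝ} {E : ℕ → Matrix V V ℝ} {p : ℕ → ℝ[X]}

lemma isSpectralSide (hS : IsSemiregularBipartition G V1 V2 δ1 δ2) (hconn : G.Connected)
    (hδ1 : 0 < δ1) (hδ2 : 0 < δ2) (hE : IsSpectralDecomposition (G.adjMatrix ℝ) d lam E)
    (hp : IsPredistance d lam (avgLocalMult E V1) p) :
    IsSpectralSide G d lam E V1 p fun k => if Even k then 1 else √δ2 / √δ1 where
  connected := hconn
  decomposition := hE
  predistance := hp
  profile_ne_zero k := by
    split_ifs <;> positivity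
  profile_zero := if_pos Even.zero
  perron := by
    obtain ⟨c, hc⟩ := hE.exists_proj_zero_eq hconn
      (fun v => by split_ifs <;> positivity) hS.adjMatrix_mulVec_sqrt
    refine ⟨c * (√δ1 * √δ1), fun u hu v => ?_⟩
    have hδ : √(δ1 : ℝ) ≠ 0 := by positivity
    rw [hc, Matrix.smul_apply, Matrix.vecMulVec_apply, if_pos hu, smul_eq_mul,
      if_congr (hS.even_dist_iff hconn u v) rfl rfl]
    simp only [hu, true_iff]
    split_ifs
    · ring
    · field_simp

lemma exists_hasIntersectionNumbers_iff_excess_eq (hS : IsSemiregularBipartition G V1 V2 δ1 δ2)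
    (hconn : G.Connected) (hE : IsSpectralDecomposition (G.adjMatrix ℝ) d lam E) (hd : Even d)
    (hV2 : V2.Nonempty) (hp : IsPredistance d lam (avgLocalMult E V1) p) :
    (∃ c b, HasIntersectionNumbers G V1 c b) ↔
      1 / (V1.card : ℝ) * ∑ u ∈ V1, ((sphere G u d).card : ℝ) = (p d).eval (lam 0) := by
  have hV1 := nonempty_of_avgLocalMult_ne_zero (hp.weight_ne_zero 0 d.zero_le)
  have hside := hS.isSpectralSide hconn (hS.degree_left_pos hconn hV1 hV2)
    (hS.symm.degree_left_pos hconn hV2 hV1) hE hp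
  rw [hside.exists_hasIntersectionNumbers_iff_excess_eq hS.toIsBipartition, if_pos hd, one_pow,
    one_mul]

end IsSemiregularBipartition

end Semiregular

/-- Theorem 3.1(b): a connected bipartite `(δ₁,δ₂)`-semiregular graph with `d+1`
distinct eigenvalues, `d` even and `m(0) ≠ |n₁ − n₂|`, is distance-biregular if and
only if `k̄_{1,d} = p_{1,d}(λ_0)` and `k̄_{2,d} = p_{2,d}(λ_0)`. -/
theorem stmt_12 {V : Type*} [Fintype V] [DecidableEq V]
    (G : SimpleGraph V) [DecidableRel G.Adj] (hconn : G.Connected)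
    (V1 V2 : Finset V) (hcover : V1 ∪ V2 = Finset.univ) (hdisj : Disjoint V1 V2)
    (hind1 : ∀ u ∈ V1, ∀ v ∈ V1, ¬ G.Adj u v)
    (hind2 : ∀ u ∈ V2, ∀ v ∈ V2, ¬ G.Adj u v)
    (δ1 δ2 : ℕ)
    (hdeg1 : ∀ u ∈ V1, G.degree u = δ1) (hdeg2 : ∀ v ∈ V2, G.degree v = δ2)
    (d : ℕ) (lam : ℕ → ℝ) (hlam : StrictAntiOn lam (Set.Iic d))
    (E : ℕ → Matrix V V ℝ)
    (hsym : ∀ i ≤ d, (E i).IsSymm)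
    (hsum : ∑ i ∈ Finset.range (d + 1), E i = 1)
    (hmul : ∀ i ≤ d, ∀ j ≤ d, E i * E j = if i = j then E i else 0)
    (heig : ∀ i ≤ d, G.adjMatrix ℝ * E i = lam i • E i)
    (hnz : ∀ i ≤ d, E i ≠ 0)
    (hEven : Even d)
    -- `m(0) ≠ |n₁ − n₂|`
    (hm0 : ∑ i ∈ (Finset.range (d + 1)).filter (fun i => lam i = 0),
        Matrix.trace (E i) ≠ |(V1.card : ℝ) - (V2.card : ℝ)|)
    -- the orthogonal polynomials for `⟨·,·⟩_{V₁}`, with weights `w_{1,i}`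
    (p1 : ℕ → Polynomial ℝ)
    (hp1deg : ∀ i ≤ d, (p1 i).degree = (i : WithBot ℕ))
    (hp1orth : ∀ i ≤ d, ∀ j ≤ d, i ≠ j →
      discInner (Finset.range (d + 1)) lam
        (fun i => (∑ u ∈ V1, E i u u) / (V1.card : ℝ)) (p1 i) (p1 j) = 0)
    (hp1norm : ∀ i ≤ d,
      discInner (Finset.range (d + 1)) lam
          (fun i => (∑ u ∈ V1, E i u u) / (V1.card : ℝ)) (p1 i) (p1 i)
        = (p1 i).eval (lam 0))
    -- the orthogonal polynomials for `⟨·,·⟩_{V₂}`, with weights `w_{2,i}`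
    (p2 : ℕ → Polynomial ℝ)
    (hp2deg : ∀ i ≤ d, (p2 i).degree = (i : WithBot ℕ))
    (hp2orth : ∀ i ≤ d, ∀ j ≤ d, i ≠ j →
      discInner (Finset.range (d + 1)) lam
        (fun i => (∑ v ∈ V2, E i v v) / (V2.card : ℝ)) (p2 i) (p2 j) = 0)
    (hp2norm : ∀ i ≤ d,
      discInner (Finset.range (d + 1)) lam
          (fun i => (∑ v ∈ V2, E i v v) / (V2.card : ℝ)) (p2 i) (p2 i)
        = (p2 i).eval (lam 0)) :
    IsDistBiregularOn G V1 V2 ↔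
      ((1 / (V1.card : ℝ)) * ∑ u ∈ V1, ((sphere G u d).card : ℝ)
          = (p1 d).eval (lam 0) ∧
        (1 / (V2.card : ℝ)) * ∑ v ∈ V2, ((sphere G v d).card : ℝ)
          = (p2 d).eval (lam 0)) := by
  have hS : IsSemiregularBipartition G V1 V2 δ1 δ2 :=
    ⟨.of_stable hdisj hcover hind1 hind2, hdeg1, hdeg2⟩
  have hE : IsSpectralDecomposition (G.adjMatrix ℝ) d lam E := ⟨hlam, hsym, hsum, hmul, heig, hnz⟩
  have hm0' := abs_sub_comm (V1.card : ℝ) V2.card ▸ hm0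
  have hp1 : IsPredistance d lam (avgLocalMult E V1) p1 :=
    ⟨hlam.injOn, fun i hi => hE.avgLocalMult_ne_zero hS.toIsBipartition hm0 hi,
      hp1deg, hp1orth, hp1norm⟩
  have hp2 : IsPredistance d lam (avgLocalMult E V2) p2 :=
    ⟨hlam.injOn, fun i hi => hE.avgLocalMult_ne_zero hS.toIsBipartition.symm hm0' hi,
      hp2deg, hp2orth, hp2norm⟩
  have hV1 := nonempty_of_avgLocalMult_ne_zero (hp1.weight_ne_zero 0 d.zero_le)
  have hV2 := nonempty_of_avgLocalMult_ne_zero (hp2.weight_ne_zero 0 d.zero_le)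
  rw [← hS.exists_hasIntersectionNumbers_iff_excess_eq hconn hE hEven hV2 hp1,
    ← hS.symm.exists_hasIntersectionNumbers_iff_excess_eq hconn hE hEven hV1 hp2]
  exact ⟨fun ⟨c1, b1, c2, b2, h1, h2⟩ => ⟨⟨c1, b1, h1⟩, c2, b2, h2⟩,
    fun ⟨⟨c1, b1, h1⟩, c2, b2, h2⟩ => ⟨c1, b1, c2, b2, h1, h2⟩⟩
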